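/- Every finite 3-regular Hamiltonian bipartite simple graph admits a string contact representation in ℝ³ in which all strings except at most one are B₁-strings (L-shapes). -/

import Mathlib

open Set

/-- Points of ℝ³, identified with triples of real numbers. -/
abbrev Pt3 : Type := Fin 3 → ℝ

/-- A vector is parallel to a coordinate axis if at most one of its
three coordinates is nonzero. -/
def AxisParallel (v : Pt3) : Prop := ∃ i : Fin 3, ∀ j : Fin 3, j ≠ i → v j = 0

/-- An axis-aligned string in ℝ³: a simple polygonal path `pts 0, pts 1, …, pts k`
(`k ≥ 1`) with consecutive points distinct, each difference parallel to a coordinate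
axis, and the path non-self-intersecting (consecutive segments meet exactly at their
common endpoint and non-consecutive segments are disjoint). -/
structure AAString where
  k : ℕ
  pts : Fin (k + 1) → Pt3
  k_pos : 1 ≤ k
  consec_ne : ∀ i : Fin k, pts i.castSucc ≠ pts i.succ
  axis : ∀ i : Fin k, AxisParallel (pts i.succ - pts i.castSucc)
  simple_consec : ∀ i j : Fin k, (i : ℕ) + 1 = (j : ℕ) →
    segment ℝ (pts i.castSucc) (pts i.succ) ∩ segment ℝ (pts j.castSucc) (pts j.succ)
      = {pts i.succ}
  simple_far : ∀ i j : Fin k, (i : ℕ) + 1 < (j : ℕ) →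
    segment ℝ (pts i.castSucc) (pts i.succ) ∩ segment ℝ (pts j.castSucc) (pts j.succ) = ∅

/-- The string, as a subset of ℝ³: the union of its closed segments. -/
def AAString.carrier (S : AAString) : Set Pt3 :=
  ⋃ i : Fin S.k, segment ℝ (S.pts i.castSucc) (S.pts i.succ)

/-- The two endpoints of the string. -/
def AAString.endpoints (S : AAString) : Set Pt3 := {S.pts 0, S.pts (Fin.last S.k)}

/-- The number of bends of the string: one less than its number of segments. -/
def AAString.bends (S : AAString) : ℕ := S.k - 1

/-- A string contact representation of a simple graph `G`: two distinct strings meet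
only at endpoints of one of them, no point lies on three distinct strings, and two
strings intersect iff the corresponding vertices are adjacent. -/
def IsStringContactRep {V : Type*} (G : SimpleGraph V) (Ψ : V → AAString) : Prop :=
  (∀ u v : V, u ≠ v → ∀ p ∈ (Ψ u).carrier ∩ (Ψ v).carrier,
      p ∈ (Ψ u).endpoints ∪ (Ψ v).endpoints) ∧
  (∀ u v w : V, u ≠ v → u ≠ w → v ≠ w →
      ∀ p : Pt3, ¬ (p ∈ (Ψ u).carrier ∧ p ∈ (Ψ v).carrier ∧ p ∈ (Ψ w).carrier)) ∧
  (∀ u v : V, u ≠ v → (((Ψ u).carrier ∩ (Ψ v).carrier).Nonempty ↔ G.Adj u v))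


/-- signs -/
noncomputable def sgnSeq (p : ℕ → ℕ) (i : ℕ) : ℝ :=
  if _h : p (i + 1) < i then - sgnSeq p (p (i + 1)) else 1
termination_by i
decreasing_by exact _h

lemma sgnSeq_cases (p : ℕ → ℕ) (i : ℕ) : sgnSeq p i = 1 ∨ sgnSeq p i = -1 := by
  induction i using Nat.strong_induction_on with
  | _ i ih =>
    rw [sgnSeq]
    split_ifs with h
    · rcases ih _ h with h1 | h1 <;> simp [h1]
    · simp

/-- positions -/
noncomputable def posSeq (p : ℕ → ℕ) (l : ℕ) : ℝ := ∑ i ∈ Finset.range l, sgnSeq p i * (1 / 3) ^ i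

lemma posSeq_succ (p : ℕ → ℕ) (l : ℕ) :
    posSeq p (l + 1) = posSeq p l + sgnSeq p l * (1 / 3) ^ l := by
  simp [posSeq, Finset.sum_range_succ]

lemma posSeq_dist (p : ℕ → ℕ) (i d : ℕ) :
    |posSeq p (i + d) - posSeq p i| ≤ 3 / 2 * ((1 / 3) ^ i - (1 / 3) ^ (i + d)) := by
  induction d with
  | zero => simp
  | succ d ih =>
    rw [← add_assoc, posSeq_succ]
    have hp : (0 : ℝ) < (1 / 3) ^ (i + d) := by positivity
    have h3 : ((1 : ℝ) / 3) ^ (i + d + 1) = (1 / 3) ^ (i + d) / 3 := by rw [pow_succ]; ring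
    rw [h3]
    rw [abs_le] at ih ⊢
    rcases sgnSeq_cases p (i + d) with h | h <;> rw [h] <;> constructor <;> linarith [ih.1, ih.2]

lemma posSeq_sign (p : ℕ → ℕ) {i l : ℕ} (h : i < l) :
    0 < sgnSeq p i * (posSeq p l - posSeq p i) := by
  obtain ⟨d, rfl⟩ := Nat.exists_eq_add_of_lt h
  have h1 := posSeq_dist p (i + 1) d
  have e : i + d + 1 = i + 1 + d := by ring
  rw [e]
  rw [posSeq_succ p i] at h1
  have hp : (0 : ℝ) < (1 / 3) ^ i := by positivity
  have hp' : (0 : ℝ) < (1 / 3) ^ (i + 1 + d) := by positivity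
  have h3 : ((1 : ℝ) / 3) ^ (i + 1) = (1 / 3) ^ i / 3 := by rw [pow_succ]; ring
  rw [h3] at h1
  rw [abs_le] at h1
  rcases sgnSeq_cases p i with h | h <;> rw [h] at h1 ⊢ <;> linarith [h1.1, h1.2]

lemma posSeq_bound (p : ℕ → ℕ) (l : ℕ) : -2 < posSeq p l ∧ posSeq p l < 2 := by
  have h1 := posSeq_dist p 0 l
  have hp' : (0 : ℝ) < (1 / 3) ^ (0 + l) := by positivity
  rw [abs_le] at h1
  have h0 : posSeq p 0 = 0 := by simp [posSeq]
  rw [h0, zero_add] at h1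
  rw [zero_add] at hp'
  simp only [pow_zero] at h1
  constructor <;> linarith [h1.1, h1.2]

lemma posSeq_inj (p : ℕ → ℕ) : Function.Injective (posSeq p) := by
  intro a b hab
  rcases lt_trichotomy a b with h | h | h
  · have := posSeq_sign p h
    rw [hab] at this; simp at this
  · exact h
  · have := posSeq_sign p h
    rw [hab] at this; simp at this

lemma posSeq_between (p : ℕ → ℕ) (k : ℕ) (h : p (k + 1) < k) :
    posSeq p (k + 2) ∈ uIcc (posSeq p k) (posSeq p (p (k + 1))) := by
  have h1 := posSeq_sign p (show k < k + 2 by omega)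
  have h2 := posSeq_sign p (show p (k + 1) < k + 2 by omega)
  have e : sgnSeq p k = - sgnSeq p (p (k + 1)) := by
    conv_lhs => rw [sgnSeq]
    rw [dif_pos h]
  rw [e] at h1
  rw [mem_uIcc]
  rcases sgnSeq_cases p (p (k + 1)) with h | h <;> rw [h] at h1 h2
  · right; constructor <;> linarith
  · left; constructor <;> linarith

lemma posSeq_ray (p : ℕ → ℕ) {k l : ℕ} (h : k < l) :
    posSeq p l ∈ uIcc (posSeq p k) (2 * sgnSeq p k) := by
  have h1 := posSeq_sign p h
  have h2 := posSeq_bound p l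
  rw [mem_uIcc]
  rcases sgnSeq_cases p k with h | h <;> rw [h] at h1 ⊢
  · left; constructor <;> linarith
  · right; constructor <;> linarith

/-- axis-parallel segments -/
lemma mem_seg_axis (a b : Pt3) (i : Fin 3) (h : ∀ j, j ≠ i → a j = b j) (q : Pt3) :
    q ∈ segment ℝ a b ↔ q i ∈ uIcc (a i) (b i) ∧ ∀ j, j ≠ i → q j = a j := by
  constructor
  · rintro ⟨s, t, hs, ht, hst, rfl⟩
    constructor
    · rw [← segment_eq_uIcc]
      exact ⟨s, t, hs, ht, hst, by simp⟩
    · intro j hj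
      simp only [Pi.add_apply, Pi.smul_apply, smul_eq_mul, ← h j hj]
      rw [← add_mul, hst, one_mul]
  · rintro ⟨h1, h2⟩
    rw [← segment_eq_uIcc] at h1
    obtain ⟨s, t, hs, ht, hst, e⟩ := h1
    refine ⟨s, t, hs, ht, hst, ?_⟩
    funext j
    by_cases hj : j = i
    · subst hj; simpa using e
    · simp only [Pi.add_apply, Pi.smul_apply, smul_eq_mul, ← h j hj]
      rw [← add_mul, hst, one_mul, h2 j hj]

lemma mem_seg0 (x x' y z : ℝ) (q : Pt3) : q ∈ segment ℝ (![x, y, z] : Pt3) ![x', y, z] ↔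
    q 0 ∈ uIcc x x' ∧ q 1 = y ∧ q 2 = z := by
  rw [mem_seg_axis _ _ 0 (by intro j hj; fin_cases j <;> simp at hj ⊢)]
  simp [Fin.forall_fin_succ]

lemma mem_seg1 (x y y' z : ℝ) (q : Pt3) : q ∈ segment ℝ (![x, y, z] : Pt3) ![x, y', z] ↔
    q 1 ∈ uIcc y y' ∧ q 0 = x ∧ q 2 = z := by
  rw [mem_seg_axis _ _ 1 (by intro j hj; fin_cases j <;> simp at hj ⊢)]
  simp [Fin.forall_fin_succ]

lemma mem_seg2 (x y z z' : ℝ) (q : Pt3) : q ∈ segment ℝ (![x, y, z] : Pt3) ![x, y, z'] ↔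
    q 2 ∈ uIcc z z' ∧ q 0 = x ∧ q 1 = y := by
  rw [mem_seg_axis _ _ 2 (by intro j hj; fin_cases j <;> simp at hj ⊢)]
  simp [Fin.forall_fin_succ]

lemma pt3_eq (q : Pt3) (x y z : ℝ) : q = ![x, y, z] ↔ q 0 = x ∧ q 1 = y ∧ q 2 = z := by
  constructor
  · rintro rfl; simp
  · rintro ⟨h0, h1, h2⟩
    funext j; fin_cases j <;> simp [h0, h1, h2]

lemma exists_LA (x y0 y1 r0 r1 : ℝ) (hy : y0 ≠ y1) (hr : r0 ≠ r1) :
    ∃ S : AAString, S.bends ≤ 1 ∧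
      (∀ q, q ∈ S.carrier ↔ (q 0 = x ∧ q 2 = r0 ∧ q 1 ∈ uIcc y0 y1) ∨
        (q 0 = x ∧ q 1 = y1 ∧ q 2 ∈ uIcc r0 r1)) ∧
      (∀ q, q ∈ S.endpoints ↔ (q 0 = x ∧ q 2 = r0 ∧ q 1 = y0) ∨
        (q 0 = x ∧ q 2 = r1 ∧ q 1 = y1)) := by
  refine ⟨⟨2, ![![x, y0, r0], ![x, y1, r0], ![x, y1, r1]], by norm_num, ?_, ?_, ?_, ?_⟩,
    le_refl _, ?_, ?_⟩
  · intro i; fin_cases i <;> simp [hy, hr]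
  · intro i; fin_cases i
    · exact ⟨1, by intro j hj; fin_cases j <;> simp at hj ⊢⟩
    · exact ⟨2, by intro j hj; fin_cases j <;> simp at hj ⊢⟩
  · intro i j hij
    have hi : i = 0 := by omega
    have hj : j = 1 := by omega
    subst hi hj
    ext q
    show q ∈ segment ℝ (![x, y0, r0] : Pt3) ![x, y1, r0] ∧
      q ∈ segment ℝ (![x, y1, r0] : Pt3) ![x, y1, r1] ↔ q = ![x, y1, r0]
    rw [mem_seg1, mem_seg2, pt3_eq]
    constructor
    · tauto
    · rintro ⟨h0, h1, h2⟩
      simp [h0, h1, h2]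
  · intro i j hij; omega
  · intro q
    simp only [AAString.carrier, mem_iUnion, Fin.exists_fin_two]
    show q ∈ segment ℝ (![x, y0, r0] : Pt3) ![x, y1, r0] ∨
      q ∈ segment ℝ (![x, y1, r0] : Pt3) ![x, y1, r1] ↔ _
    rw [mem_seg1, mem_seg2]; tauto
  · intro q
    show q = ![x, y0, r0] ∨ q = ![x, y1, r1] ↔ _
    rw [pt3_eq, pt3_eq]; tauto

lemma exists_LB (x y0 y1 r0 r1 : ℝ) (hy : y0 ≠ y1) (hr : r0 ≠ r1) :
    ∃ S : AAString, S.bends ≤ 1 ∧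
      (∀ q, q ∈ S.carrier ↔ (q 2 = x ∧ q 0 = r0 ∧ q 1 ∈ uIcc y0 y1) ∨
        (q 2 = x ∧ q 1 = y1 ∧ q 0 ∈ uIcc r0 r1)) ∧
      (∀ q, q ∈ S.endpoints ↔ (q 2 = x ∧ q 0 = r0 ∧ q 1 = y0) ∨
        (q 2 = x ∧ q 0 = r1 ∧ q 1 = y1)) := by
  refine ⟨⟨2, ![![r0, y0, x], ![r0, y1, x], ![r1, y1, x]], by norm_num, ?_, ?_, ?_, ?_⟩,
    le_refl _, ?_, ?_⟩
  · intro i; fin_cases i <;> simp [hy, hr]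
  · intro i; fin_cases i
    · exact ⟨1, by intro j hj; fin_cases j <;> simp at hj ⊢⟩
    · exact ⟨0, by intro j hj; fin_cases j <;> simp at hj ⊢⟩
  · intro i j hij
    have hi : i = 0 := by omega
    have hj : j = 1 := by omega
    subst hi hj
    ext q
    show q ∈ segment ℝ (![r0, y0, x] : Pt3) ![r0, y1, x] ∧
      q ∈ segment ℝ (![r0, y1, x] : Pt3) ![r1, y1, x] ↔ q = ![r0, y1, x]
    rw [mem_seg1, mem_seg0, pt3_eq]
    constructor
    · tauto
    · rintro ⟨h0, h1, h2⟩
      simp [h0, h1, h2]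
  · intro i j hij; omega
  · intro q
    simp only [AAString.carrier, mem_iUnion, Fin.exists_fin_two]
    show q ∈ segment ℝ (![r0, y0, x] : Pt3) ![r0, y1, x] ∨
      q ∈ segment ℝ (![r0, y1, x] : Pt3) ![r1, y1, x] ↔ _
    rw [mem_seg1, mem_seg0]; tauto
  · intro q
    show q = ![r0, y0, x] ∨ q = ![r1, y1, x] ↔ _
    rw [pt3_eq, pt3_eq]; tauto

lemma exists_fin4 (P : Fin 4 → Prop) : (∃ i, P i) ↔ P 0 ∨ P 1 ∨ P 2 ∨ P 3 := by
  simp [Fin.exists_fin_succ]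

/-- the exceptional string -/
lemma exists_U (a b c d : ℝ) (hb : b ≠ a) (hd : 0 < d) (hc : c < 2) :
    ∃ S : AAString,
      (∀ q, q ∈ S.carrier ↔ (q 0 = a ∧ q 1 = 0 ∧ q 2 ∈ uIcc (-2) 3) ∨
        (q 2 = 3 ∧ q 1 = 0 ∧ q 0 ∈ uIcc a b) ∨ (q 2 = 3 ∧ q 0 = b ∧ q 1 ∈ uIcc 0 d) ∨
        (q 0 = b ∧ q 1 = d ∧ q 2 ∈ uIcc 3 c)) ∧
      (∀ q, q 0 = b → q 1 = d → q 2 = c → q ∈ S.endpoints) := by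
  refine ⟨⟨4, ![![a, 0, -2], ![a, 0, 3], ![b, 0, 3], ![b, d, 3], ![b, d, c]],
    by norm_num, ?_, ?_, ?_, ?_⟩, ?_, ?_⟩
  · intro i; fin_cases i
    · intro h; have := congrFun h 2; simp at this; linarith
    · intro h; have := congrFun h 0; simp at this; exact hb this.symm
    · intro h; have := congrFun h 1; simp at this; linarith
    · intro h; have := congrFun h 2; simp at this; linarith
  · intro i; fin_cases i
    · exact ⟨2, by intro j hj; fin_cases j <;> simp at hj ⊢⟩
    · exact ⟨0, by intro j hj; fin_cases j <;> simp at hj ⊢⟩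
    · exact ⟨1, by intro j hj; fin_cases j <;> simp at hj ⊢⟩
    · exact ⟨2, by intro j hj; fin_cases j <;> simp at hj ⊢⟩
  · intro i j hij
    have hi : (i = 0 ∧ j = 1) ∨ (i = 1 ∧ j = 2) ∨ (i = 2 ∧ j = 3) := by omega
    rcases hi with ⟨rfl, rfl⟩ | ⟨rfl, rfl⟩ | ⟨rfl, rfl⟩
    · ext q
      show q ∈ segment ℝ (![a, 0, -2] : Pt3) ![a, 0, 3] ∧
        q ∈ segment ℝ (![a, 0, 3] : Pt3) ![b, 0, 3] ↔ q = ![a, 0, 3]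
      rw [mem_seg2, mem_seg0, pt3_eq]
      constructor
      · tauto
      · rintro ⟨h0, h1, h2⟩; simp [h0, h1, h2]
    · ext q
      show q ∈ segment ℝ (![a, 0, 3] : Pt3) ![b, 0, 3] ∧
        q ∈ segment ℝ (![b, 0, 3] : Pt3) ![b, d, 3] ↔ q = ![b, 0, 3]
      rw [mem_seg0, mem_seg1, pt3_eq]
      constructor
      · tauto
      · rintro ⟨h0, h1, h2⟩; simp [h0, h1, h2]
    · ext q
      show q ∈ segment ℝ (![b, 0, 3] : Pt3) ![b, d, 3] ∧
        q ∈ segment ℝ (![b, d, 3] : Pt3) ![b, d, c] ↔ q = ![b, d, 3]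
      rw [mem_seg1, mem_seg2, pt3_eq]
      constructor
      · tauto
      · rintro ⟨h0, h1, h2⟩; simp [h0, h1, h2]
  · intro i j hij
    have hi : (i = 0 ∧ j = 2) ∨ (i = 0 ∧ j = 3) ∨ (i = 1 ∧ j = 3) := by omega
    rw [eq_empty_iff_forall_notMem]
    rcases hi with ⟨rfl, rfl⟩ | ⟨rfl, rfl⟩ | ⟨rfl, rfl⟩
    · intro q
      show ¬ (q ∈ segment ℝ (![a, 0, -2] : Pt3) ![a, 0, 3] ∧
        q ∈ segment ℝ (![b, 0, 3] : Pt3) ![b, d, 3])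
      rw [mem_seg2, mem_seg1]
      rintro ⟨⟨-, h1, -⟩, -, h2, -⟩
      exact hb (h2.symm.trans h1)
    · intro q
      show ¬ (q ∈ segment ℝ (![a, 0, -2] : Pt3) ![a, 0, 3] ∧
        q ∈ segment ℝ (![b, d, 3] : Pt3) ![b, d, c])
      rw [mem_seg2, mem_seg2]
      rintro ⟨⟨-, h1, -⟩, -, h2, -⟩
      exact hb (h2.symm.trans h1)
    · intro q
      show ¬ (q ∈ segment ℝ (![a, 0, 3] : Pt3) ![b, 0, 3] ∧
        q ∈ segment ℝ (![b, d, 3] : Pt3) ![b, d, c])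
      rw [mem_seg0, mem_seg2]
      rintro ⟨⟨-, h1, -⟩, -, -, h2⟩
      linarith
  · intro q
    simp only [AAString.carrier, mem_iUnion]
    rw [exists_fin4]
    show q ∈ segment ℝ (![a, 0, -2] : Pt3) ![a, 0, 3] ∨
        q ∈ segment ℝ (![a, 0, 3] : Pt3) ![b, 0, 3] ∨
        q ∈ segment ℝ (![b, 0, 3] : Pt3) ![b, d, 3] ∨
        q ∈ segment ℝ (![b, d, 3] : Pt3) ![b, d, c] ↔ _
    rw [mem_seg2, mem_seg0, mem_seg1, mem_seg2]; tauto
  · intro q h0 h1 h2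
    show q = _ ∨ q = ![b, d, c]
    right
    rw [pt3_eq]; exact ⟨h0, h1, h2⟩

/-- the coordinate that is constant on the `k`-th string -/
def ownC (k : ℕ) (q : Pt3) : ℝ := if k % 2 = 0 then q 0 else q 2

/-- the coordinate along the main segment of the `k`-th string -/
def rngC (k : ℕ) (q : Pt3) : ℝ := if k % 2 = 0 then q 2 else q 0

lemma exists_pt (k : ℕ) (o y r : ℝ) : ∃ q : Pt3, ownC k q = o ∧ q 1 = y ∧ rngC k q = r := by
  by_cases h : k % 2 = 0
  · exact ⟨![o, y, r], by simp [ownC, rngC, h]⟩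
  · exact ⟨![r, y, o], by simp [ownC, rngC, h]⟩

lemma ownC_eq_rngC {k l : ℕ} (h : (k + l) % 2 = 1) (q : Pt3) : ownC k q = rngC l q := by
  unfold ownC rngC
  by_cases h1 : k % 2 = 0
  · rw [if_pos h1, if_neg (by omega)]
  · rw [if_neg h1, if_pos (by omega)]

lemma ownC_eq_ownC {k l : ℕ} (h : (k + l) % 2 = 0) (q : Pt3) : ownC k q = ownC l q := by
  unfold ownC
  by_cases h1 : k % 2 = 0
  · rw [if_pos h1, if_pos (by omega)]
  · rw [if_neg h1, if_neg (by omega)]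

lemma exists_L (k : ℕ) (x y0 y1 r0 r1 : ℝ) (hy : y0 ≠ y1) (hr : r0 ≠ r1) :
    ∃ S : AAString, S.bends ≤ 1 ∧
      (∀ q, q ∈ S.carrier ↔ (ownC k q = x ∧ rngC k q = r0 ∧ q 1 ∈ uIcc y0 y1) ∨
        (ownC k q = x ∧ q 1 = y1 ∧ rngC k q ∈ uIcc r0 r1)) ∧
      (∀ q, q ∈ S.endpoints ↔ (ownC k q = x ∧ rngC k q = r0 ∧ q 1 = y0) ∨
        (ownC k q = x ∧ rngC k q = r1 ∧ q 1 = y1)) := by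
  by_cases h : k % 2 = 0
  · obtain ⟨S, hS⟩ := exists_LA x y0 y1 r0 r1 hy hr
    exact ⟨S, by simpa only [ownC, rngC, if_pos h] using hS⟩
  · obtain ⟨S, hS⟩ := exists_LB x y0 y1 r0 r1 hy hr
    exact ⟨S, by simpa only [ownC, rngC, if_neg h] using hS⟩

/-- level of a chord -/
def lev (p : ℕ → ℕ) (k : ℕ) : ℝ := ((min k (p k) : ℕ) : ℝ)

/-- far end of the main segment of string `k+1` -/
noncomputable def farE (p : ℕ → ℕ) (k : ℕ) : ℝ :=
  if p (k + 1) < k then posSeq p (p (k + 1)) else 2 * sgnSeq p k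

theorem core (n : ℕ) (hn : 4 ≤ n) (hev : n % 2 = 0) (p : ℕ → ℕ)
    (hp : ∀ k < n, p k < n) (hinv : ∀ k < n, p (p k) = k)
    (hpar : ∀ k < n, (p k + k) % 2 = 1) (hne : ∀ k, k + 1 < n → p k ≠ k + 1)
    (hne' : p 0 ≠ n - 1) :
    ∃ S : ℕ → AAString, (∀ k, 1 ≤ k → k < n → (S k).bends ≤ 1) ∧
      (∀ k l, k < l → l < n → ∀ q, q ∈ (S k).carrier → q ∈ (S l).carrier →
        q ∈ (S k).endpoints ∪ (S l).endpoints) ∧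
      (∀ k l, k < l → l < n → (k + l) % 2 = 0 → ∀ q, q ∈ (S k).carrier → q ∉ (S l).carrier) ∧
      (∀ k l, k < l → l < n → (((S k).carrier ∩ (S l).carrier).Nonempty ↔
        l = k + 1 ∨ l = p k ∨ (k = 0 ∧ l = n - 1))) := by
  have hne2 : ∀ k, k + 1 < n → p (k + 1) ≠ k := by
    intro k hk h
    have := hinv (k + 1) hk
    rw [h] at this
    exact hne k hk this
  have levInj : ∀ k l, k < n → l < n → lev p k = lev p l → k = l ∨ l = p k := by
    intro k l hk hl h
    unfold lev at h
    have h' : min k (p k) = min l (p l) := by exact_mod_cast h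
    have a1 := hinv k hk
    have a2 := hinv l hl
    rcases le_total k (p k) with c1 | c1 <;> rcases le_total l (p l) with c2 | c2
    · left; simpa [c1, c2] using h'
    · right
      have : k = p l := by simpa [c1, c2] using h'
      rw [this, a2]
    · right
      have : p k = l := by simpa [c1, c2] using h'
      exact this.symm
    · left
      have : p k = p l := by simpa [c1, c2] using h'
      rw [← a1, ← a2, this]
  have levp : ∀ k, k < n → lev p (p k) = lev p k := by
    intro k hk
    unfold lev
    rw [hinv k hk, min_comm]
  have lev0 : lev p 0 = 0 := by simp [lev]
  -- last vertex
  have hl1 : p (n - 1) < n - 2 := by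
    have b1 := hp (n - 1) (by omega)
    have b2 := hpar (n - 1) (by omega)
    have b3 := hne2 (n - 2) (by omega)
    rw [show n - 2 + 1 = n - 1 by omega] at b3
    omega
  have hl2 : p (n - 1) ≠ 0 := by
    intro h
    have := hinv (n - 1) (by omega)
    rw [h] at this; exact hne' this
  have hlev1 : 0 < lev p (n - 1) := by
    unfold lev
    have : 0 < min (n - 1) (p (n - 1)) := by omega
    exact_mod_cast this
  have farB : ∀ k, -2 ≤ farE p k ∧ farE p k ≤ 2 := by
    intro k
    unfold farE
    split_ifs
    · have := posSeq_bound p (p (k + 1)); constructor <;> linarith [this.1, this.2]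
    · rcases sgnSeq_cases p k with h | h <;> rw [h] <;> norm_num
  have farNe : ∀ k, posSeq p k ≠ farE p k := by
    intro k
    unfold farE
    split_ifs with h
    · intro h'
      have := posSeq_inj p h'
      omega
    · intro h'
      have := posSeq_bound p k
      rw [h'] at this
      rcases sgnSeq_cases p k with h | h <;> rw [h] at this <;> norm_num at this
  have inMainSucc : ∀ k, posSeq p (k + 2) ∈ uIcc (posSeq p k) (farE p k) := by
    intro k
    unfold farE
    split_ifs with h
    · exact posSeq_between p k h
    · exact posSeq_ray p (by omega)
  have inMainP : ∀ k, k + 1 < n → k + 1 < p (k + 1) →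
      posSeq p (p (k + 1)) ∈ uIcc (posSeq p k) (farE p k) := by
    intro k _ h
    unfold farE
    rw [if_neg (by omega)]
    exact posSeq_ray p (by omega)
  have hex : ∀ k, ∃ S : AAString,
      (k = 0 → (∀ q, q ∈ S.carrier ↔
        (q 0 = posSeq p 0 ∧ q 1 = 0 ∧ q 2 ∈ uIcc (-2) 3) ∨
        (q 2 = 3 ∧ q 1 = 0 ∧ q 0 ∈ uIcc (posSeq p 0) (posSeq p n)) ∨
        (q 2 = 3 ∧ q 0 = posSeq p n ∧ q 1 ∈ uIcc 0 (lev p (n - 1))) ∨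
        (q 0 = posSeq p n ∧ q 1 = lev p (n - 1) ∧ q 2 ∈ uIcc 3 (posSeq p (n - 1)))) ∧
      (∀ q, q 0 = posSeq p n → q 1 = lev p (n - 1) → q 2 = posSeq p (n - 1) →
        q ∈ S.endpoints)) ∧
      (∀ j, k = j + 1 → k < n → S.bends ≤ 1 ∧
      (∀ q, q ∈ S.carrier ↔ (ownC k q = posSeq p k ∧ rngC k q = posSeq p j ∧
          q 1 ∈ uIcc (lev p j) (lev p k)) ∨
        (ownC k q = posSeq p k ∧ q 1 = lev p k ∧ rngC k q ∈ uIcc (posSeq p j) (farE p j))) ∧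
      (∀ q, q ∈ S.endpoints ↔ (ownC k q = posSeq p k ∧ rngC k q = posSeq p j ∧ q 1 = lev p j) ∨
        (ownC k q = posSeq p k ∧ rngC k q = farE p j ∧ q 1 = lev p k))) := by
    intro k
    rcases k with _ | k
    · obtain ⟨S, hS⟩ := exists_U (posSeq p 0) (posSeq p n) (posSeq p (n - 1)) (lev p (n - 1))
        (fun h => by have := posSeq_inj p h; omega) hlev1 (posSeq_bound p _).2
      exact ⟨S, fun _ => hS, fun j hj => by omega⟩
    · by_cases hk : k + 1 < n
      · obtain ⟨S, hS⟩ := exists_L (k + 1) (posSeq p (k + 1)) (lev p k) (lev p (k + 1))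
          (posSeq p k) (farE p k) (fun h => by
            rcases levInj k (k + 1) (by omega) hk h with h | h
            · omega
            · exact hne k hk h.symm) (farNe k)
        refine ⟨S, fun h => by omega, fun j hj _ => ?_⟩
        obtain rfl : j = k := by omega
        exact hS
      · obtain ⟨S, -⟩ := exists_LA 0 0 1 0 1 (by norm_num) (by norm_num)
        exact ⟨S, fun h => by omega, fun j hj h => by omega⟩
  choose S hS0 hS1 using hex
  obtain ⟨C0, E0⟩ := hS0 0 rfl
  have C1 := fun k (hk : k + 1 < n) => (hS1 (k + 1) k rfl hk).2.1
  have E1 := fun k (hk : k + 1 < n) => (hS1 (k + 1) k rfl hk).2.2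
  have own0 : ∀ k, k % 2 = 0 → ∀ q, ownC k q = q 0 := fun k h q => by simp [ownC, h]
  have rng0 : ∀ k, k % 2 = 0 → ∀ q, rngC k q = q 2 := fun k h q => by simp [rngC, h]
  have own1 : ∀ k, k % 2 = 1 → ∀ q, ownC k q = q 2 := fun k h q => by simp [ownC, h]
  have rng1 : ∀ k, k % 2 = 1 → ∀ q, rngC k q = q 0 := fun k h q => by simp [rngC, h]
  have uB : ∀ k z, z ∈ uIcc (posSeq p k) (farE p k) → z ≤ 2 := by
    intro k z hz
    have := posSeq_bound p k
    have h2 := farB k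
    rw [mem_uIcc] at hz
    rcases hz with h | h <;> linarith [h.1, h.2, this.2, h2.2]
  have hDisj : ∀ k l, k < l → l < n → (k + l) % 2 = 0 →
      ∀ q, q ∈ (S k).carrier → q ∉ (S l).carrier := by
    intro k l hkl hl hpr q hqk hql
    obtain ⟨j, rfl⟩ : ∃ j, l = j + 1 := ⟨l - 1, by omega⟩
    have o : ownC (j + 1) q = posSeq p (j + 1) := by
      rcases (C1 j hl q).1 hql with h | h <;> exact h.1
    rcases k with _ | k
    · have ev : (j + 1) % 2 = 0 := by omega
      have z2 : q 2 ≤ 2 := by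
        rw [← rng0 (j + 1) ev q]
        rcases (C1 j hl q).1 hql with h | h
        · rw [h.2.1]; exact (posSeq_bound p j).2.le
        · exact uB _ _ h.2.2
      rw [own0 _ ev] at o
      rcases (C0 q).1 hqk with h | h | h | h
      · have := posSeq_inj p (o.symm.trans h.1); omega
      · linarith [h.1]
      · linarith [h.1]
      · have := posSeq_inj p (o.symm.trans h.1); omega
    · have o' : ownC (k + 1) q = posSeq p (k + 1) := by
        rcases (C1 k (by omega) q).1 hqk with h | h <;> exact h.1
      rw [ownC_eq_ownC hpr] at o'
      have := posSeq_inj p (o.symm.trans o')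
      omega
  have hMeet : ∀ k l, k < l → l < n → ∀ q, q ∈ (S k).carrier → q ∈ (S l).carrier →
      (l = k + 1 ∧ q ∈ (S l).endpoints) ∨ (l = p k ∧ q ∈ (S l).endpoints) ∨
      (k = 0 ∧ l = n - 1 ∧ q ∈ (S 0).endpoints) := by
    intro k l hkl hl q hqk hql
    have hpr : (k + l) % 2 = 1 := by
      by_contra h
      exact hDisj k l hkl hl (by omega) q hqk hql
    obtain ⟨j, rfl⟩ : ∃ j, l = j + 1 := ⟨l - 1, by omega⟩
    have o : ownC (j + 1) q = posSeq p (j + 1) := by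
      rcases (C1 j hl q).1 hql with h | h <;> exact h.1
    -- finishing lemma for a main-main crossing with `j + 1 = p k`
    have fin2 : j + 1 = p k → rngC (j + 1) q = posSeq p k → q 1 = lev p (j + 1) →
        q ∈ (S (j + 1)).endpoints := by
      intro h1 h2 h3
      rw [E1 j hl]
      right
      refine ⟨o, ?_, h3⟩
      have e : p (j + 1) = k := by rw [h1]; exact hinv k (by omega)
      unfold farE
      rw [if_pos, e, h2]
      have := hne2 j hl
      omega
    rcases k with _ | k
    · have od : (j + 1) % 2 = 1 := by omega
      have o2 := o
      rw [own1 _ od] at o2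
      have z2 : q 2 < 3 := by rw [o2]; linarith [(posSeq_bound p (j + 1)).2]
      rcases (C0 q).1 hqk with h | h | h | h
      · rcases (C1 j hl q).1 hql with g | g
        · have g2 := g.2.1
          rw [rng1 _ od] at g2
          have := posSeq_inj p (g2.symm.trans h.1)
          subst this
          left
          refine ⟨rfl, ?_⟩
          rw [E1 0 hl]
          left
          exact ⟨g.1, g.2.1, by rw [h.2.1, lev0]⟩
        · right; left
          have : lev p 0 = lev p (j + 1) := by rw [lev0, ← g.2.1, h.2.1]
          have e : j + 1 = p 0 := by
            rcases levInj 0 (j + 1) (by omega) hl this with h | h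
            · omega
            · exact h
          exact ⟨e, fin2 e (by rw [rng1 _ od, h.1]) g.2.1⟩
      · linarith [h.1]
      · linarith [h.1]
      · rcases (C1 j hl q).1 hql with g | g
        · have g2 := g.2.1
          rw [rng1 _ od] at g2
          have := posSeq_inj p (g2.symm.trans h.1)
          omega
        · right; right
          have e : j + 1 = n - 1 := by
            have : lev p (n - 1) = lev p (j + 1) := by rw [← g.2.1, h.2.1]
            rcases levInj (n - 1) (j + 1) (by omega) hl this with h | h
            · omega
            · have := hpar (n - 1) (by omega)
              omega
          refine ⟨rfl, e, E0 q h.1 h.2.1 ?_⟩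
          rw [o2, e]
    · have o' : ownC (k + 1) q = posSeq p (k + 1) := by
        rcases (C1 k (by omega) q).1 hqk with h | h <;> exact h.1
      have r1 : rngC (j + 1) q = posSeq p (k + 1) := by rw [← ownC_eq_rngC hpr, o']
      have r2 : rngC (k + 1) q = posSeq p (j + 1) := by
        rw [← ownC_eq_rngC (by omega : ((j + 1) + (k + 1)) % 2 = 1), o]
      rcases (C1 k (by omega) q).1 hqk with h | h
      · have := posSeq_inj p (r2.symm.trans h.2.1)
        omega
      · rcases (C1 j hl q).1 hql with g | g
        · have := posSeq_inj p (r1.symm.trans g.2.1)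
          subst this
          left
          refine ⟨rfl, ?_⟩
          rw [E1 _ hl]
          left
          exact ⟨g.1, g.2.1, h.2.1⟩
        · right; left
          have e : j + 1 = p (k + 1) := by
            rcases levInj (k + 1) (j + 1) (by omega) hl (by rw [← h.2.1, g.2.1]) with h | h
            · omega
            · exact h
          exact ⟨e, fin2 e r1 g.2.1⟩
  refine ⟨S, ?_, ?_, hDisj, ?_⟩
  · intro k h1 hk
    exact (hS1 k (k - 1) (by omega) hk).1
  · intro k l hkl hl q h1 h2
    rcases hMeet k l hkl hl q h1 h2 with ⟨-, h⟩ | ⟨-, h⟩ | ⟨rfl, -, h⟩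
    · exact Or.inr h
    · exact Or.inr h
    · exact Or.inl h
  · intro k l hkl hl
    constructor
    · rintro ⟨q, h1, h2⟩
      rcases hMeet k l hkl hl q h1 h2 with ⟨h, -⟩ | ⟨h, -⟩ | ⟨h, h', -⟩
      · exact Or.inl h
      · exact Or.inr (Or.inl h)
      · exact Or.inr (Or.inr ⟨h, h'⟩)
    · have z3 : ∀ m, posSeq p m ∈ uIcc (-2 : ℝ) 3 := by
        intro m
        rw [mem_uIcc]
        left
        constructor <;> linarith [(posSeq_bound p m).1, (posSeq_bound p m).2]
      rintro (rfl | rfl | ⟨rfl, rfl⟩)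
      · obtain ⟨q, q1, q2, q3⟩ := exists_pt (k + 1) (posSeq p (k + 1)) (lev p k) (posSeq p k)
        refine ⟨q, ?_, ?_⟩
        · rcases k with _ | k
          · rw [C0]
            left
            rw [rng1 _ (by norm_num)] at q3
            rw [own1 _ (by norm_num)] at q1
            exact ⟨q3, by rw [q2, lev0], by rw [q1]; exact z3 _⟩
          · rw [C1 k (by omega)]
            right
            refine ⟨?_, q2, ?_⟩
            · rw [ownC_eq_rngC (by omega : ((k + 1) + (k + 1 + 1)) % 2 = 1), q3]
            · rw [← ownC_eq_rngC (by omega : ((k + 1 + 1) + (k + 1)) % 2 = 1), q1]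
              exact inMainSucc k
        · rw [C1 k hl]
          left
          exact ⟨q1, q3, by rw [q2]; exact left_mem_uIcc⟩
      · obtain ⟨q, q1, q2, q3⟩ := exists_pt (p k) (posSeq p (p k)) (lev p k) (posSeq p k)
        have hpk := hpar k (by omega)
        refine ⟨q, ?_, ?_⟩
        · rcases k with _ | k
          · rw [C0]
            left
            rw [rng1 _ (by omega)] at q3
            rw [own1 _ (by omega)] at q1
            exact ⟨q3, by rw [q2, lev0], by rw [q1]; exact z3 _⟩
          · rw [C1 k (by omega)]
            right
            refine ⟨?_, q2, ?_⟩
            · rw [ownC_eq_rngC (by omega : ((k + 1) + p (k + 1)) % 2 = 1), q3]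
            · rw [← ownC_eq_rngC hpk, q1]
              exact inMainP k (by omega) hkl
        · obtain ⟨j, hj⟩ : ∃ j, p k = j + 1 := ⟨p k - 1, by omega⟩
          have hl' := hl
          rw [hj] at hl'
          rw [hj, C1 j hl']
          rw [hj] at q1 q3
          right
          refine ⟨q1, ?_, ?_⟩
          · rw [q2, ← hj, levp k (by omega)]
          · have e : p (j + 1) = k := by rw [← hj]; exact hinv k (by omega)
            have := hne2 j hl'
            unfold farE
            rw [if_pos (by omega), e, q3]
            exact right_mem_uIcc
      · obtain ⟨j, hj⟩ : ∃ j, n - 1 = j + 1 := ⟨n - 2, by omega⟩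
        refine ⟨![posSeq p n, lev p (n - 1), posSeq p (n - 1)], ?_, ?_⟩
        · rw [C0]
          right; right; right
          simp
        · rw [hj, C1 j (by omega)]
          right
          rw [own1 _ (by omega), rng1 _ (by omega)]
          refine ⟨by simp, by simp, ?_⟩
          have := inMainSucc j
          rw [show j + 2 = n by omega] at this
          simpa using this

/-- Every finite 3-regular Hamiltonian bipartite simple graph admits a string contact
representation in ℝ³ in which all strings except at most one are `B₁`-strings
(`L`-shapes). -/
theorem cubic_hamiltonian_bipartite_LContactRep {V : Type*} [Fintype V] [DecidableEq V]
    (G : SimpleGraph V) [DecidableRel G.Adj]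
    (hreg : G.IsRegularOfDegree 3) (hham : G.IsHamiltonian) (hbip : G.Colorable 2) :
    ∃ Ψ : V → AAString, IsStringContactRep G Ψ ∧
      ∃ v₀ : V, ∀ v : V, v ≠ v₀ → (Ψ v).bends ≤ 1 := by
  classical
  obtain ⟨n, hncard⟩ : ∃ n, n = Fintype.card V := ⟨_, rfl⟩
  have hdeg : ∀ v, 3 < n := fun v => by
    have := G.degree_lt_card_verts v
    rw [hreg v] at this
    omega
  have hc1 : Fintype.card V ≠ 1 := by
    intro h
    obtain ⟨v, -⟩ := Fintype.card_eq_one_iff.1 h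
    have := hdeg v
    omega
  obtain ⟨a, w, hw⟩ := hham hc1
  have hn : 4 ≤ n := hdeg a
  have hlen : w.length = n := by rw [hncard]; exact hw.length_eq
  obtain ⟨g, hg⟩ : ∃ g, g = w.getVert := ⟨_, rfl⟩
  have gadj : ∀ i, i < n → G.Adj (g i) (g (i + 1)) := by
    intro i hi
    rw [hg]
    exact w.adj_getVert_succ (by omega)
  have gn : g n = g 0 := by
    rw [hg, ← hlen]; simp
  have ginj : ∀ i j, i < n → j < n → g i = g j → i = j := by
    intro i j hi hj h
    rw [hg] at h
    exact hw.isCycle.getVert_injOn' (show i ≤ w.length - 1 by omega)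
      (show j ≤ w.length - 1 by omega) h
  have gsurj : ∀ v, ∃ i, i < n ∧ g i = v := by
    intro v
    obtain ⟨i, hi, hi'⟩ := SimpleGraph.Walk.mem_support_iff_exists_getVert.1 (hw.mem_support v)
    rw [← hg] at hi
    rcases Nat.lt_or_ge i n with h | h
    · exact ⟨i, h, hi⟩
    · have : i = n := by omega
      exact ⟨0, by omega, by rw [← gn, ← this, hi]⟩
  -- parity
  obtain ⟨c⟩ := hbip
  have cne : ∀ u v, G.Adj u v → ((c u : Fin 2) : ℕ) + ((c v : Fin 2) : ℕ) = 1 := by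
    intro u v h
    have h1 : (c u : Fin 2) ≠ c v := c.valid h
    have h2 : ((c u : Fin 2) : ℕ) ≠ ((c v : Fin 2) : ℕ) := fun h => h1 (Fin.ext h)
    have h3 := (c u : Fin 2).isLt
    have h4 := (c v : Fin 2).isLt
    omega
  have cpar : ∀ i, i ≤ n →
      ((c (g i) : Fin 2) : ℕ) % 2 = (((c (g 0) : Fin 2) : ℕ) + i) % 2 := by
    intro i
    induction i with
    | zero => intro _; rfl
    | succ i ih =>
      intro hi
      have h1 := ih (by omega)
      have h2 := cne _ _ (gadj i (by omega))
      omega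
  have hev : n % 2 = 0 := by
    have := cpar n le_rfl
    rw [gn] at this
    omega
  have apar : ∀ i l, i < n → l < n → G.Adj (g i) (g l) → (i + l) % 2 = 1 := by
    intro i l hi hl h
    have h1 := cpar i hi.le
    have h2 := cpar l hl.le
    have h3 := cne _ _ h
    omega
  -- successor and predecessor on the cycle
  obtain ⟨nx, hnx⟩ : ∃ nx : ℕ → ℕ, ∀ i, nx i = if i + 1 = n then 0 else i + 1 :=
    ⟨_, fun _ => rfl⟩
  obtain ⟨pv, hpv⟩ : ∃ pv : ℕ → ℕ, ∀ i, pv i = if i = 0 then n - 1 else i - 1 :=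
    ⟨_, fun _ => rfl⟩
  have nxlt : ∀ i, i < n → nx i < n := by
    intro i hi; rw [hnx]; split_ifs <;> omega
  have pvlt : ∀ i, i < n → pv i < n := by
    intro i hi; rw [hpv]; split_ifs <;> omega
  have nxpv : ∀ i l, i < n → l < n → (i = nx l ↔ l = pv i) := by
    intro i l hi hl; rw [hnx, hpv]; split_ifs <;> omega
  have nxne : ∀ i, i < n → nx i ≠ pv i := by
    intro i hi; rw [hnx, hpv]; split_ifs <;> omega
  have nxadj : ∀ i, i < n → G.Adj (g i) (g (nx i)) := by
    intro i hi
    have := gadj i hi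
    rw [hnx]
    split_ifs with h
    · rw [h, gn] at this; exact this
    · exact this
  have pvadj : ∀ i, i < n → G.Adj (g i) (g (pv i)) := by
    intro i hi
    have := nxadj (pv i) (pvlt i hi)
    rw [← (nxpv i (pv i) hi (pvlt i hi)).2 rfl] at this
    exact this.symm
  -- the chord partner
  have hpex : ∀ i, ∃ j, i < n → j < n ∧ j ≠ nx i ∧ j ≠ pv i ∧
      ∀ l, l < n → (G.Adj (g i) (g l) ↔ l = nx i ∨ l = pv i ∨ l = j) := by
    intro i
    by_cases hi : i < n
    · have m1 : g (nx i) ∈ G.neighborFinset (g i) := by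
        rw [SimpleGraph.mem_neighborFinset]; exact nxadj i hi
      have m2 : g (pv i) ∈ (G.neighborFinset (g i)).erase (g (nx i)) := by
        rw [Finset.mem_erase, SimpleGraph.mem_neighborFinset]
        exact ⟨fun h => nxne i hi (ginj _ _ (pvlt i hi) (nxlt i hi) h).symm, pvadj i hi⟩
      have hcd : (((G.neighborFinset (g i)).erase (g (nx i))).erase (g (pv i))).card = 1 := by
        rw [Finset.card_erase_of_mem m2, Finset.card_erase_of_mem m1,
          SimpleGraph.card_neighborFinset_eq_degree, hreg]
      obtain ⟨x, hx⟩ := Finset.card_eq_one.1 hcd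
      obtain ⟨j, hj, rfl⟩ := gsurj x
      have key : ∀ v, (v ≠ g (pv i) ∧ v ≠ g (nx i) ∧ G.Adj (g i) v) ↔ v = g j := by
        intro v
        have : v ∈ (((G.neighborFinset (g i)).erase (g (nx i))).erase (g (pv i))) ↔
          v ∈ ({g j} : Finset V) := by rw [hx]
        rwa [Finset.mem_erase, Finset.mem_erase, SimpleGraph.mem_neighborFinset,
          Finset.mem_singleton] at this
      obtain ⟨k1, k2, k3⟩ := (key (g j)).2 rfl
      refine ⟨j, fun _ => ⟨hj, fun h => k2 (by rw [h]), fun h => k1 (by rw [h]), ?_⟩⟩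
      intro l hl
      constructor
      · intro h
        by_contra hcon
        push Not at hcon
        have := (key (g l)).1 ⟨fun h => hcon.2.1 (ginj _ _ hl (pvlt i hi) h),
          fun h => hcon.1 (ginj _ _ hl (nxlt i hi) h), h⟩
        exact hcon.2.2 (ginj _ _ hl hj this)
      · rintro (rfl | rfl | rfl)
        · exact nxadj i hi
        · exact pvadj i hi
        · exact k3
    · exact ⟨0, fun h => absurd h hi⟩
  choose p hpp using hpex
  have plt : ∀ i, i < n → p i < n := fun i hi => (hpp i hi).1
  have padj : ∀ i, i < n → G.Adj (g i) (g (p i)) := fun i hi =>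
    ((hpp i hi).2.2.2 _ (plt i hi)).2 (Or.inr (Or.inr rfl))
  have pinv : ∀ i, i < n → p (p i) = i := by
    intro i hi
    have h := ((hpp (p i) (plt i hi)).2.2.2 i hi).1 (padj i hi).symm
    rcases h with h | h | h
    · exact absurd ((nxpv i (p i) hi (plt i hi)).1 h) (hpp i hi).2.2.1
    · exact absurd ((nxpv (p i) i (plt i hi) hi).2 h) (hpp i hi).2.1
    · exact h.symm
  obtain ⟨S, hSb, hSe, hSd, hSa⟩ := core n hn hev p plt pinv
    (fun k hk => by
      have := apar k (p k) hk (plt k hk) (padj k hk)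
      omega)
    (fun k hk => by
      have := (hpp k (by omega)).2.1
      rw [hnx, if_neg (by omega)] at this
      exact this)
    (by
      have := (hpp 0 (by omega)).2.2.1
      rw [hpv, if_pos rfl] at this
      exact this)
  choose idx idlt idg using gsurj
  have idinj : ∀ u v, u ≠ v → idx u ≠ idx v := by
    intro u v h h'
    apply h
    rw [← idg u, ← idg v, h']
  have adjIff : ∀ k l, k < l → l < n →
      (G.Adj (g k) (g l) ↔ l = k + 1 ∨ l = p k ∨ (k = 0 ∧ l = n - 1)) := by
    intro k l hkl hl
    rw [(hpp k (by omega)).2.2.2 l hl, hnx, hpv, if_neg (by omega)]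
    split_ifs <;> omega
  refine ⟨fun v => S (idx v), ⟨?_, ?_, ?_⟩, g 0, ?_⟩
  · intro u v huv q hq
    rcases lt_or_gt_of_ne (idinj u v huv) with h | h
    · exact hSe _ _ h (idlt v) q hq.1 hq.2
    · exact (hSe _ _ h (idlt u) q hq.2 hq.1).symm
  · have hpair : ∀ u v, u ≠ v → (idx u + idx v) % 2 = 0 →
        ∀ q, q ∈ (S (idx u)).carrier → q ∈ (S (idx v)).carrier → False := by
      intro u v huv hm q h1 h2
      rcases lt_or_gt_of_ne (idinj u v huv) with h | h
      · exact hSd _ _ h (idlt v) hm q h1 h2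
      · exact hSd _ _ h (idlt u) (by omega) q h2 h1
    rintro u v x huv hux hvx q ⟨h1, h2, h3⟩
    have : (idx u + idx v) % 2 = 0 ∨ (idx u + idx x) % 2 = 0 ∨ (idx v + idx x) % 2 = 0 := by
      omega
    rcases this with h | h | h
    · exact hpair u v huv h q h1 h2
    · exact hpair u x hux h q h1 h3
    · exact hpair v x hvx h q h2 h3
  · intro u v huv
    rcases lt_or_gt_of_ne (idinj u v huv) with h | h
    · have := (hSa _ _ h (idlt v)).trans (adjIff _ _ h (idlt v)).symm
      rwa [idg, idg] at this
    · have := (hSa _ _ h (idlt u)).trans (adjIff _ _ h (idlt u)).symm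
      rw [idg, idg] at this
      rw [inter_comm, G.adj_comm]
      exact this
  · intro v hv
    apply hSb _ _ (idlt v)
    by_contra h
    have h0 : idx v = 0 := by omega
    apply hv
    rw [← h0, idg]
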